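/- arXiv:2412.18002 — 3 statements merged into one kernel-verified Lean document; each statement's English description precedes it below -/
import Mathlib

section
/- For every integer h ≥ 41020 and every integer k ≥ h, every k-nice subset of ℤ² whose height is exactly h has at most (3264π/10255)·k + (4946/3675)·h + 1 elements. -/
/-- A set `Q ⊆ ℤ²` is `k`-nice if every element is a nonzero coprime pair,
`Q` does not contain both a pair and its negation, and all cross determinants
are bounded by `k` in absolute value. -/
def IsKNice (k : ℕ) (Q : Set (ℤ × ℤ)) : Prop :=
  (∀ p ∈ Q, p ≠ (0, 0) ∧ Int.gcd p.1 p.2 = 1) ∧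
  (∀ p ∈ Q, -p ∉ Q) ∧
  (∀ p ∈ Q, ∀ q ∈ Q, |p.1 * q.2 - q.1 * p.2| ≤ (k : ℤ))

/-- `Q` is y-non-negative: all second coordinates are non-negative. -/
def YNonneg (Q : Set (ℤ × ℤ)) : Prop := ∀ p ∈ Q, 0 ≤ p.2

/-- The height of `Q` is at most `h`. -/
def HeightLe (Q : Set (ℤ × ℤ)) (h : ℕ) : Prop := ∀ p ∈ Q, |p.2| ≤ (h : ℤ)

/-- The height of `Q` is exactly `h`: the maximum of `|n|` over `(m, n) ∈ Q` is `h`. -/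
def HeightEq (Q : Set (ℤ × ℤ)) (h : ℕ) : Prop :=
  HeightLe Q h ∧ ∃ p ∈ Q, |p.2| = (h : ℤ)

/-!
Replacing points by their negatives, we may assume that `Q` lies in the closed upper half-plane.
Let `K` be the absolutely convex hull of `Q`; the determinant of any two points of `K` is still at
most `k` in absolute value. The row of `Q` at height `n` consists of integers coprime to `n` lying
in a chord of `K`. Sieving it only by the primes dividing a fixed modulus `P` bounds its size by
`φ(d) / d` times the width of the chord plus an error depending only on `d = gcd n P`.

The chord widths `L u` decrease with `u ≥ 0`, so Abel summation replaces `φ(d) / d` by its mean over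
a period, up to a boundary term, and leaves `∫₀ʰ L`. The determinant bound gives
`v * L u + u * L v ≤ 2 * k` for all `u, v ∈ [0, h]`; averaging it over the quarter circle
`u² + v² = h²` bounds the integral by `π / 2 * k`. The case `u = 0`, `v = h` controls the boundary
term, and `P = 210` gives the stated constants.
-/

open Finset Function MeasureTheory Real
open scoped Nat

/-- The asymptotic density `φ(d) / d` of the integers coprime to `d`. -/
def coprimeDensity (d : ℕ) : ℚ := φ d / d

/-- `d` times the excess of the number of `m < n` coprime to `d` over its expected value
`φ(d) / d * n`; the factor `d` keeps it an integer. -/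
def coprimeDiscrepancy (d n : ℕ) : ℤ := d * Nat.count d.Coprime n - φ d * n

/-- The sieve error of `d`: the optimal constant in the bound `φ(d) / d * (b - a) + sieveError d`
for the number of integers in `[a, b]` coprime to `d`. Up to the factor `d`, it is the oscillation
of `coprimeDiscrepancy d` plus `φ(d)`; since the discrepancy vanishes at `0`, its maximum and
minimum are encoded as suprema in `ℕ` of its positive and negative parts. -/
def sieveError (d : ℕ) : ℚ :=
  ((range d).sup (fun r ↦ (coprimeDiscrepancy d r).toNat) +
    (range d).sup (fun r ↦ (-coprimeDiscrepancy d r).toNat) + φ d : ℕ) / d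

/-- The mean value of `n ↦ f (gcd n P)` over a period. -/
def gcdMean (f : ℕ → ℚ) (P : ℕ) : ℚ := (∑ i ∈ range P, f ((i + 1).gcd P)) / P

theorem coprimeDensity_nonneg (d : ℕ) : 0 ≤ coprimeDensity d := by
  unfold coprimeDensity; positivity

theorem sieveError_nonneg (d : ℕ) : 0 ≤ sieveError d := by
  unfold sieveError; positivity

theorem coprimeDiscrepancy_periodic (d : ℕ) : Periodic (coprimeDiscrepancy d) d := by
  intro n
  have hcount : Nat.count d.Coprime (n + d) = Nat.count d.Coprime n + φ d := by
    rw [Nat.count_add', Nat.count_eq_card_filter_range d.Coprime d,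
      ← Nat.totient_eq_card_coprime]
    simp only [Nat.coprime_add_self_right]
  simp only [coprimeDiscrepancy, hcount]
  push_cast
  ring

theorem coprimeDiscrepancy_sub_le {d : ℕ} (hd : 0 < d) (m n : ℕ) :
    (coprimeDiscrepancy d m - coprimeDiscrepancy d n : ℚ) ≤ d * sieveError d - φ d := by
  rw [sieveError, mul_div_cancel₀ _ (by positivity),
    ← (coprimeDiscrepancy_periodic d).map_mod_nat m,
    ← (coprimeDiscrepancy_periodic d).map_mod_nat n]
  have hmax := le_sup (f := fun r ↦ (coprimeDiscrepancy d r).toNat)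
    (mem_range.2 (Nat.mod_lt m hd))
  have hmin := le_sup (f := fun r ↦ (-coprimeDiscrepancy d r).toNat)
    (mem_range.2 (Nat.mod_lt n hd))
  rw [Nat.cast_add _ (φ d), add_sub_cancel_right]
  norm_cast
  omega

theorem card_coprime_Ico_le {d : ℕ} (hd : 0 < d) {a b : ℕ} (hab : a ≤ b) :
    (#{m ∈ Ico a (b + 1) | d.Coprime m} : ℚ) ≤ coprimeDensity d * (b - a) + sieveError d := by
  have hcount : Nat.count d.Coprime a + #{m ∈ Ico a (b + 1) | d.Coprime m} =
      Nat.count d.Coprime (b + 1) := by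
    simp only [Nat.count_eq_card_filter_range, card_filter]
    exact sum_range_add_sum_Ico _ (by lia)
  have hdisc := coprimeDiscrepancy_sub_le hd (b + 1) a
  simp only [coprimeDiscrepancy, ← hcount] at hdisc
  push_cast at hdisc
  have hd' : (0 : ℚ) < d := mod_cast hd
  rw [coprimeDensity, ← mul_le_mul_iff_right₀ hd', mul_add, ← mul_assoc,
    mul_div_cancel₀ _ hd'.ne']
  linarith

theorem card_le_of_coprime {d : ℕ} (hd : 0 < d) {S : Finset ℕ} {L : ℝ} (hL : 0 ≤ L)
    (hcop : ∀ m ∈ S, d.Coprime m) (hdiam : ∀ m ∈ S, ∀ n ∈ S, (m - n : ℝ) ≤ L) :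
    (#S : ℝ) ≤ coprimeDensity d * L + sieveError d := by
  have hdens : (0 : ℝ) ≤ coprimeDensity d := mod_cast coprimeDensity_nonneg d
  have herr : (0 : ℝ) ≤ sieveError d := mod_cast sieveError_nonneg d
  rcases S.eq_empty_or_nonempty with rfl | hne
  · rw [card_empty, Nat.cast_zero]
    positivity
  have hsub : S ⊆ {m ∈ Ico (S.min' hne) (S.max' hne + 1) | d.Coprime m} := fun m hm ↦
    mem_filter.2 ⟨mem_Ico.2 ⟨S.min'_le m hm, Nat.lt_succ_of_le (S.le_max' m hm)⟩, hcop m hm⟩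
  have hcard : (#S : ℚ) ≤
      coprimeDensity d * (S.max' hne - S.min' hne : ℚ) + sieveError d :=
    (Nat.cast_le.2 (card_le_card hsub)).trans (card_coprime_Ico_le hd (S.min'_le_max' hne))
  calc (#S : ℝ) ≤ coprimeDensity d * (S.max' hne - S.min' hne : ℝ) + sieveError d := by
        exact_mod_cast hcard
    _ ≤ coprimeDensity d * L + sieveError d := by
        gcongr
        exact hdiam _ (S.max'_mem hne) _ (S.min'_mem hne)

theorem card_le_of_isCoprime {d : ℕ} (hd : 0 < d) {S : Finset ℤ} {L : ℝ} (hL : 0 ≤ L)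
    (hcop : ∀ m ∈ S, IsCoprime (d : ℤ) m) (hdiam : ∀ m ∈ S, ∀ n ∈ S, (m - n : ℝ) ≤ L) :
    (#S : ℝ) ≤ coprimeDensity d * L + sieveError d := by
  -- Translating by a multiple of `d` moves `S` into `ℕ` without affecting coprimality to `d`.
  obtain ⟨c, hc⟩ : ∃ c : ℤ, ∀ m ∈ S, 0 ≤ m + d * c := by
    obtain ⟨a, ha⟩ := S.bddBelow
    refine ⟨|a|, fun m hm ↦ ?_⟩
    have habs : |a| ≤ d * |a| := le_mul_of_one_le_left (abs_nonneg _) (by exact_mod_cast hd)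
    linarith [neg_abs_le a, ha hm]
  let shift (m : ℤ) : ℕ := (m + d * c).toNat
  have hshift : ∀ m ∈ S, (shift m : ℤ) = m + d * c := fun m hm ↦ Int.toNat_of_nonneg (hc m hm)
  have hinj : Set.InjOn shift S := fun m hm n hn hmn ↦ by
    have := hshift m hm
    have := hshift n hn
    lia
  rw [← card_image_of_injOn hinj]
  refine card_le_of_coprime hd hL (forall_mem_image.2 fun m hm ↦ ?_)
    (forall_mem_image.2 fun m hm ↦ forall_mem_image.2 fun n hn ↦ ?_)
  · rw [← Nat.isCoprime_iff_coprime, hshift m hm]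
    exact (hcop m hm).add_mul_left_right c
  · have hm' : (shift m : ℝ) = m + d * c := mod_cast hshift m hm
    have hn' : (shift n : ℝ) = n + d * c := mod_cast hshift n hn
    linarith [hdiam m hm n hn]

theorem gcdMean_nonneg {f : ℕ → ℚ} (hf : ∀ d, 0 ≤ f d) (P : ℕ) : 0 ≤ gcdMean f P :=
  div_nonneg (sum_nonneg fun _ _ ↦ hf _) P.cast_nonneg

theorem sum_range_mul_of_periodic {f : ℕ → ℚ} {P : ℕ} (hf : Periodic f P) (q : ℕ) :
    ∑ i ∈ range (q * P), f i = q * ∑ i ∈ range P, f i := by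
  induction q with
  | zero => simp
  | succ q ih =>
    have hshift (i : ℕ) : f (q * P + i) = f i := by
      rw [add_comm]; exact hf.nat_mul q i
    rw [Nat.succ_mul, sum_range_add, ih, sum_congr rfl fun i _ ↦ hshift i]
    push_cast
    ring

theorem sum_gcd_le {f : ℕ → ℚ} (hf : ∀ d, 0 ≤ f d) {P : ℕ} (hP : 0 < P) (N : ℕ) :
    ∑ i ∈ range N, f ((i + 1).gcd P) ≤ gcdMean f P * (N + P) := by
  have hper : Periodic (fun i ↦ f ((i + 1).gcd P)) P := fun i ↦ by
    simp only [add_right_comm i P 1, Nat.gcd_add_self_left]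
  have hmean : gcdMean f P * P = ∑ i ∈ range P, f ((i + 1).gcd P) :=
    div_mul_cancel₀ _ (by positivity)
  have hmean_nonneg : 0 ≤ gcdMean f P := gcdMean_nonneg hf P
  calc ∑ i ∈ range N, f ((i + 1).gcd P)
      ≤ ∑ i ∈ range ((N / P + 1) * P), f ((i + 1).gcd P) :=
        sum_le_sum_of_subset_of_nonneg
          (range_mono (by rw [mul_comm]; exact (Nat.lt_mul_div_succ N hP).le)) fun _ _ _ ↦ hf _
    _ = gcdMean f P * ((N / P + 1 : ℕ) * P) := by
        rw [sum_range_mul_of_periodic hper, ← hmean]; ring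
    _ ≤ gcdMean f P * (N + P) := by
        gcongr
        rw [Nat.cast_succ, add_one_mul]
        gcongr
        exact_mod_cast Nat.div_mul_le_self N P

/-- Abel's inequality. -/
theorem sum_mul_succ_le_of_antitoneOn {s f : ℕ → ℝ} {D : ℝ} {N : ℕ}
    (hs : ∀ M, ∑ i ∈ range M, s i ≤ D) (hf : AntitoneOn f (Set.Iic N)) (hfN : 0 ≤ f N) :
    ∑ i ∈ range N, s i * f (i + 1) ≤ D * f 0 := by
  have hparts : ∀ M ≤ N, ∑ i ∈ range M, s i * f (i + 1) ≤
      (∑ i ∈ range M, s i) * f M + D * (f 0 - f M) := by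
    intro M
    induction M with
    | zero => simp
    | succ M ih =>
      intro hM
      have hdecr : f (M + 1) ≤ f M := hf (Set.mem_Iic.2 (by lia)) (Set.mem_Iic.2 hM) M.le_succ
      rw [sum_range_succ, sum_range_succ]
      nlinarith [ih (by lia), hs M]
  nlinarith [hparts N le_rfl, hs N]

theorem sum_gcd_mul_le {f : ℕ → ℚ} (hf : ∀ d, 0 ≤ f d) {P : ℕ} (hP : 0 < P) {L : ℝ → ℝ} {h : ℕ}
    (hL : AntitoneOn L (Set.Icc 0 h)) (hLh : 0 ≤ L h) :
    ∑ i ∈ range h, (f ((i + 1).gcd P) : ℝ) * L (i + 1 : ℕ) ≤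
      gcdMean f P * ((∫ u in (0 : ℝ)..h, L u) + P * L 0) := by
  have hmean : (0 : ℝ) ≤ gcdMean f P := mod_cast gcdMean_nonneg hf P
  have hpartial (M : ℕ) :
      ∑ i ∈ range M, ((f ((i + 1).gcd P) : ℝ) - gcdMean f P) ≤ gcdMean f P * P := by
    have hsum : ∑ i ∈ range M, (f ((i + 1).gcd P) : ℝ) ≤ gcdMean f P * (M + P) :=
      mod_cast sum_gcd_le hf hP M
    rw [sum_sub_distrib, sum_const, card_range, nsmul_eq_mul]
    linarith
  have hanti : AntitoneOn (fun n : ℕ ↦ L n) (Set.Iic h) := fun m hm n hn hmn ↦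
    hL ⟨m.cast_nonneg, Nat.cast_le.2 hm⟩ ⟨n.cast_nonneg, Nat.cast_le.2 hn⟩ (Nat.cast_le.2 hmn)
  have habel := sum_mul_succ_le_of_antitoneOn hpartial hanti hLh
  simp only [sub_mul, sum_sub_distrib, ← mul_sum, Nat.cast_zero] at habel
  have hint : ∑ i ∈ range h, L (i + 1 : ℕ) ≤ ∫ u in (0 : ℝ)..h, L u := by
    simpa only [zero_add] using AntitoneOn.sum_le_integral (x₀ := 0) (by simpa only [zero_add])
  linarith [mul_le_mul_of_nonneg_left hint hmean]

/-- Substituting `u = h sin t` and `u = h cos t` and averaging turns the pointwise bound on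
`v * L u + u * L v` into a bound on the integral. -/
theorem integral_le_of_forall_mul_add_mul_le {L : ℝ → ℝ} {h C : ℝ} (hh : 0 ≤ h)
    (hL : IntegrableOn L (Set.Icc 0 h))
    (hC : ∀ u v, 0 ≤ u → 0 ≤ v → u ^ 2 + v ^ 2 = h ^ 2 → v * L u + u * L v ≤ C) :
    ∫ u in 0..h, L u ≤ π / 4 * C := by
  let F (t : ℝ) : ℝ := h * cos t * L (h * sin t)
  have hpi : (0 : ℝ) ≤ π / 2 := by positivity
  have hcos : ∀ t ∈ Set.Ioo 0 (π / 2), 0 ≤ h * cos t := fun t ht ↦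
    mul_nonneg hh (cos_nonneg_of_mem_Icc ⟨by linarith [ht.1], ht.2.le⟩)
  have hcont : ContinuousOn (fun t ↦ h * sin t) (Set.Icc 0 (π / 2)) := by fun_prop
  have hderiv : ∀ t ∈ Set.Ioo 0 (π / 2), HasDerivAt (fun t ↦ h * sin t) (h * cos t) t :=
    fun t _ ↦ (hasDerivAt_sin t).const_mul h
  have hsubst : ∫ t in 0..π / 2, F t = ∫ u in 0..h, L u := by
    rw [intervalIntegral.integral_of_le hpi, intervalIntegral.integral_of_le hh,
      ← integral_Icc_eq_integral_Ioc, ← integral_Icc_eq_integral_Ioc]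
    simpa only [F, smul_eq_mul, sin_zero, sin_pi_div_two, mul_zero, mul_one] using
      integral_Icc_deriv_smul_of_deriv_nonneg (g := L) hcont hderiv hcos hpi
  have hF : IntervalIntegrable F volume 0 (π / 2) := by
    rw [intervalIntegrable_iff_integrableOn_Icc_of_le hpi]
    simpa only [F, smul_eq_mul] using
      (integrableOn_Icc_deriv_smul_iff_of_deriv_nonneg (g := L) hcont hderiv hcos hpi).2
        (by simpa only [sin_zero, sin_pi_div_two, mul_zero, mul_one] using hL)
  have hreflect : ∫ t in 0..π / 2, F (π / 2 - t) = ∫ t in 0..π / 2, F t := by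
    simp only [intervalIntegral.integral_comp_sub_left, sub_self, sub_zero]
  have hF' : IntervalIntegrable (fun t ↦ F (π / 2 - t)) volume 0 (π / 2) := by
    simpa only [sub_self, sub_zero] using (hF.comp_sub_left (π / 2)).symm
  have hpointwise : ∀ t ∈ Set.Icc 0 (π / 2), F t + F (π / 2 - t) ≤ C := fun t ht ↦ by
    simp only [F, sin_pi_div_two_sub, cos_pi_div_two_sub]
    exact hC _ _ (mul_nonneg hh (sin_nonneg_of_mem_Icc ⟨ht.1, by linarith [ht.2]⟩))
      (mul_nonneg hh (cos_nonneg_of_mem_Icc ⟨by linarith [ht.1], ht.2⟩))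
      (by linear_combination h ^ 2 * sin_sq_add_cos_sq t)
  have hmono := intervalIntegral.integral_mono_on hpi (hF.add hF') intervalIntegrable_const
    hpointwise
  rw [intervalIntegral.integral_add hF hF', hreflect, hsubst, intervalIntegral.integral_const,
    smul_eq_mul] at hmono
  linarith

theorem abs_le_of_mem_absConvexHull {E : Type*} [AddCommGroup E] [Module ℝ E] {S : Set E}
    {k : ℝ} (f : E →ₗ[ℝ] ℝ) (hS : ∀ x ∈ S, |f x| ≤ k) : ∀ x ∈ absConvexHull ℝ S, |f x| ≤ k := by
  have hbalanced : Balanced ℝ {x | |f x| ≤ k} := balanced_iff_smul_mem.2 fun c hc x hx ↦ by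
    rw [Set.mem_ofPred_eq, map_smul, smul_eq_mul, abs_mul]
    exact (mul_le_of_le_one_left (abs_nonneg _) hc).trans hx
  have hconvex : Convex ℝ {x | |f x| ≤ k} := by
    simpa only [Set.preimage, Set.mem_Icc, ← abs_le] using (convex_Icc (-k) k).linear_preimage f
  exact absConvexHull_min hS ⟨hbalanced, hconvex⟩

/-- The determinant of two vectors of the plane, as a bilinear form. -/
def planeDet : ℝ × ℝ →ₗ[ℝ] ℝ × ℝ →ₗ[ℝ] ℝ :=
  LinearMap.mk₂ ℝ (fun x y ↦ x.1 * y.2 - y.1 * x.2)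
    (fun x x' y ↦ by simp only [Prod.fst_add, Prod.snd_add]; ring)
    (fun c x y ↦ by simp only [Prod.smul_fst, Prod.smul_snd, smul_eq_mul]; ring)
    (fun x y y' ↦ by simp only [Prod.fst_add, Prod.snd_add]; ring)
    (fun c x y ↦ by simp only [Prod.smul_fst, Prod.smul_snd, smul_eq_mul]; ring)

theorem planeDet_apply (x y : ℝ × ℝ) : planeDet x y = x.1 * y.2 - y.1 * x.2 := rfl

theorem abs_planeDet_le_of_mem_absConvexHull {S : Set (ℝ × ℝ)} {k : ℝ}
    (hS : ∀ x ∈ S, ∀ y ∈ S, |planeDet x y| ≤ k) :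
    ∀ x ∈ absConvexHull ℝ S, ∀ y ∈ absConvexHull ℝ S, |planeDet x y| ≤ k := fun x hx ↦
  abs_le_of_mem_absConvexHull (planeDet x) fun y hy ↦
    abs_le_of_mem_absConvexHull (planeDet.flip y) (fun x hx ↦ hS x hx y hy) x hx

/-- The width of `K` at height `u`: the length, measured as a diameter, of the horizontal chord cut
out of `K` by the line of height `u`. -/
noncomputable def chordWidth (K : Set (ℝ × ℝ)) (u : ℝ) : ℝ := Metric.diam {x | (x, u) ∈ K}

theorem mul_diam_le_of_forall_mul_dist_le {α : Type*} [PseudoMetricSpace α] {A : Set α} {a C : ℝ}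
    (hA : A.Nonempty) (ha : 0 ≤ a) (h : ∀ x ∈ A, ∀ y ∈ A, a * dist x y ≤ C) :
    a * Metric.diam A ≤ C := by
  rcases ha.eq_or_lt with rfl | ha
  · obtain ⟨x, hx⟩ := hA
    simpa only [zero_mul] using h x hx x hx
  · rw [← le_div_iff₀' ha]
    exact Metric.diam_le_of_forall_dist_le_of_nonempty hA fun x hx y hy ↦
      (le_div_iff₀' ha).2 (h x hx y hy)

theorem mul_diam_add_mul_diam_le {α β : Type*} [PseudoMetricSpace α] [PseudoMetricSpace β]
    {A : Set α} {B : Set β} {a b C : ℝ} (hA : A.Nonempty) (hB : B.Nonempty)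
    (ha : 0 ≤ a) (hb : 0 ≤ b)
    (h : ∀ x ∈ A, ∀ y ∈ A, ∀ z ∈ B, ∀ w ∈ B, a * dist x y + b * dist z w ≤ C) :
    a * Metric.diam A + b * Metric.diam B ≤ C := by
  rw [← le_sub_iff_add_le]
  refine mul_diam_le_of_forall_mul_dist_le hA ha fun x hx y hy ↦ ?_
  rw [le_sub_comm]
  exact mul_diam_le_of_forall_mul_dist_le hB hb fun z hz w hw ↦
    le_sub_iff_add_le'.2 (h x hx y hy z hz w hw)

section AbsConvex

variable {K : Set (ℝ × ℝ)} {h k a : ℝ}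

theorem isBounded_chord (hdet : ∀ x ∈ K, ∀ y ∈ K, |planeDet x y| ≤ k) (hh : 0 < h)
    (ha : (a, h) ∈ K) (u : ℝ) : Bornology.IsBounded {x | (x, u) ∈ K} := by
  refine Metric.isBounded_iff.2 ⟨2 * k / h, fun x hx y hy ↦ ?_⟩
  obtain ⟨hx₁, hx₂⟩ := abs_le.1 (hdet _ hx _ ha)
  obtain ⟨hy₁, hy₂⟩ := abs_le.1 (hdet _ hy _ ha)
  simp only [planeDet_apply] at hx₁ hx₂ hy₁ hy₂
  rw [dist_eq, le_div_iff₀ hh, ← abs_of_pos hh, ← abs_mul, abs_le]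
  constructor <;> linarith

/-- Both points are the same convex combination of a point of the chord at height `v` and the
negative of another. -/
theorem exists_mem_chord_sub_eq (hK : AbsConvex ℝ K) {x y u v : ℝ}
    (hu : 0 ≤ u) (huv : u ≤ v) (hx : (x, v) ∈ K) (hy : (y, v) ∈ K) :
    ∃ x' y', (x', u) ∈ K ∧ (y', u) ∈ K ∧ x' - y' = x - y := by
  obtain ⟨hbalanced, hconvex⟩ := hK
  have hv : 0 ≤ v := hu.trans huv
  have hs₀ : 0 ≤ u / v := div_nonneg hu hv
  have hs₁ : u / v ≤ 1 := div_le_one_of_le₀ huv hv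
  have hsv : u / v * v = u := div_mul_cancel_of_imp fun hv0 ↦ by linarith
  set s := u / v
  have hcomb {p q : ℝ} (hp : (p, v) ∈ K) (hq : (q, v) ∈ K) :
      ((1 + s) / 2 * p - (1 - s) / 2 * q, u) ∈ K := by
    have hpq := hconvex hp (hbalanced.neg_mem_iff.2 hq) (a := (1 + s) / 2) (b := (1 - s) / 2)
      (by linarith) (by linarith) (by ring)
    convert hpq using 1
    ext
    · simp only [Prod.neg_mk, Prod.smul_mk, Prod.mk_add_mk, smul_eq_mul]; ring
    · simp only [Prod.neg_mk, Prod.smul_mk, Prod.mk_add_mk, smul_eq_mul]; linarith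
  exact ⟨_, _, hcomb hx hy, hcomb hy hx, by ring⟩

theorem nonempty_chord (hK : AbsConvex ℝ K) {u : ℝ} (hu : 0 ≤ u) (huh : u ≤ h)
    (ha : (a, h) ∈ K) : {x | (x, u) ∈ K}.Nonempty := by
  obtain ⟨x, -, hx, -⟩ := exists_mem_chord_sub_eq hK hu huh ha ha
  exact ⟨x, hx⟩

theorem antitoneOn_chordWidth (hK : AbsConvex ℝ K)
    (hbdd : ∀ u, Bornology.IsBounded {x | (x, u) ∈ K}) :
    AntitoneOn (chordWidth K) (Set.Ici 0) := by
  intro u hu v _ huv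
  refine Metric.diam_le_of_forall_dist_le Metric.diam_nonneg fun x hx y hy ↦ ?_
  obtain ⟨x', y', hx', hy', hsub⟩ := exists_mem_chord_sub_eq hK hu huv hx hy
  rw [dist_eq, ← hsub, ← dist_eq]
  exact Metric.dist_le_diam_of_mem (hbdd u) hx' hy'

theorem mul_chordWidth_add_mul_chordWidth_le (hdet : ∀ x ∈ K, ∀ y ∈ K, |planeDet x y| ≤ k)
    {u v : ℝ} (hu : 0 ≤ u) (hv : 0 ≤ v) (hKu : {x | (x, u) ∈ K}.Nonempty)
    (hKv : {x | (x, v) ∈ K}.Nonempty) :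
    v * chordWidth K u + u * chordWidth K v ≤ 2 * k := by
  have hsigned {x y z w : ℝ} (hx : (x, u) ∈ K) (hy : (y, u) ∈ K) (hz : (z, v) ∈ K)
      (hw : (w, v) ∈ K) : v * (x - y) + u * (z - w) ≤ 2 * k := by
    have hxw := (le_abs_self _).trans (hdet _ hx _ hw)
    have hzy := (le_abs_self _).trans (hdet _ hz _ hy)
    simp only [planeDet_apply] at hxw hzy
    linarith
  refine mul_diam_add_mul_diam_le hKu hKv hv hu fun x hx y hy z hz w hw ↦ ?_
  rw [dist_eq, dist_eq]
  rcases abs_cases (x - y) with ⟨hxy, _⟩ | ⟨hxy, _⟩ <;>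
  rcases abs_cases (z - w) with ⟨hzw, _⟩ | ⟨hzw, _⟩ <;>
  rw [hxy, hzw]
  · exact hsigned hx hy hz hw
  · linarith [hsigned hx hy hw hz]
  · linarith [hsigned hy hx hz hw]
  · linarith [hsigned hy hx hw hz]

theorem chordWidth_zero_le (hK : AbsConvex ℝ K) (hdet : ∀ x ∈ K, ∀ y ∈ K, |planeDet x y| ≤ k)
    (hh : 0 < h) (ha : (a, h) ∈ K) : chordWidth K 0 ≤ 2 * k / h := by
  rw [le_div_iff₀' hh]
  simpa only [zero_mul, add_zero] using mul_chordWidth_add_mul_chordWidth_le hdet le_rfl hh.le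
    (nonempty_chord hK le_rfl hh.le ha) ⟨a, ha⟩

theorem integral_chordWidth_le (hK : AbsConvex ℝ K)
    (hdet : ∀ x ∈ K, ∀ y ∈ K, |planeDet x y| ≤ k) (hh : 0 < h) (ha : (a, h) ∈ K) :
    ∫ u in 0..h, chordWidth K u ≤ π / 2 * k := by
  have hanti := antitoneOn_chordWidth hK (isBounded_chord hdet hh ha)
  have hchord {u v : ℝ} (hu : 0 ≤ u) (huv : u ^ 2 + v ^ 2 = h ^ 2) :
      {x | (x, u) ∈ K}.Nonempty :=
    nonempty_chord hK hu (le_of_sq_le_sq (by nlinarith) hh.le) ha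
  have hint := integral_le_of_forall_mul_add_mul_le hh.le
    ((hanti.mono Set.Icc_subset_Ici_self).integrableOn_isCompact isCompact_Icc)
    fun u v hu hv huv ↦ mul_chordWidth_add_mul_chordWidth_le hdet hu hv (hchord hu huv)
      (hchord hv ((add_comm _ _).trans huv))
  linarith

end AbsConvex

/-- The absolutely convex hull in `ℝ × ℝ` of a set of lattice points. -/
def realHull (Q : Set (ℤ × ℤ)) : Set (ℝ × ℝ) :=
  absConvexHull ℝ (Prod.map (Int.cast : ℤ → ℝ) (Int.cast : ℤ → ℝ) '' Q)

theorem cast_mem_realHull {Q : Set (ℤ × ℤ)} {m n : ℤ} (h : (m, n) ∈ Q) :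
    ((m, n) : ℝ × ℝ) ∈ realHull Q :=
  subset_absConvexHull ⟨(m, n), h, rfl⟩

theorem absConvex_realHull (Q : Set (ℤ × ℤ)) : AbsConvex ℝ (realHull Q) :=
  absConvex_absConvexHull

section IsKNice

variable {Q : Set (ℤ × ℤ)} {h k : ℕ}

theorem IsKNice.abs_planeDet_le (hQ : IsKNice k Q) :
    ∀ x ∈ realHull Q, ∀ y ∈ realHull Q, |planeDet x y| ≤ k := by
  refine abs_planeDet_le_of_mem_absConvexHull ?_
  rintro _ ⟨p, hp, rfl⟩ _ ⟨q, hq, rfl⟩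
  simp only [planeDet_apply, Prod.map_fst, Prod.map_snd]
  exact_mod_cast hQ.2.2 p hp q hq

theorem IsKNice.finite (hQ : IsKNice k Q) (hle : HeightLe Q h) {p : ℤ × ℤ} (hp : p ∈ Q)
    (hp₂ : p.2 ≠ 0) : Q.Finite := by
  let coords (q : ℤ × ℤ) : ℤ × ℤ := (q.1 * p.2 - p.1 * q.2, q.2)
  have hmaps : Set.MapsTo coords Q (Set.Icc (-k : ℤ) k ×ˢ Set.Icc (-h : ℤ) h) := fun q hq ↦
    ⟨abs_le.1 (hQ.2.2 q hq p hp), abs_le.1 (hle q hq)⟩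
  have hinj : Set.InjOn coords Q := fun q _ r _ hqr ↦ by
    obtain ⟨hdet, hsnd⟩ := Prod.mk.inj hqr
    rw [hsnd, sub_left_inj] at hdet
    exact Prod.ext (mul_right_cancel₀ hp₂ hdet) hsnd
  exact Set.Finite.of_injOn hmaps hinj ((Set.finite_Icc _ _).prod (Set.finite_Icc _ _))

theorem IsKNice.injOn_of_eq_or_neg (hQ : IsKNice k Q) {σ : ℤ × ℤ → ℤ × ℤ}
    (hσ : ∀ p, σ p = p ∨ σ p = -p) : Set.InjOn σ Q := by
  intro p hp q hq hpq
  rcases hσ p with hσp | hσp <;> rcases hσ q with hσq | hσq <;> rw [hσp, hσq] at hpq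
  · exact hpq
  · exact absurd (hpq ▸ hp) (hQ.2.1 q hq)
  · exact absurd (hpq ▸ hq) (hQ.2.1 p hp)
  · exact neg_injective hpq

theorem IsKNice.image_of_eq_or_neg (hQ : IsKNice k Q) {σ : ℤ × ℤ → ℤ × ℤ}
    (hσ : ∀ p, σ p = p ∨ σ p = -p) : IsKNice k (σ '' Q) := by
  refine ⟨?_, ?_, ?_⟩
  · rintro _ ⟨p, hp, rfl⟩
    obtain ⟨hne, hgcd⟩ := hQ.1 p hp
    rcases hσ p with hσp | hσp <;> rw [hσp]
    · exact ⟨hne, hgcd⟩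
    · exact ⟨neg_ne_zero.2 hne, by rw [Prod.fst_neg, Prod.snd_neg, Int.gcd_neg, Int.neg_gcd, hgcd]⟩
  · rintro _ ⟨p, hp, rfl⟩ ⟨q, hq, hqp⟩
    have hp_mem : -p ∉ Q := hQ.2.1 p hp
    have hne : p ≠ -p := fun hself ↦ hp_mem (hself ▸ hp)
    rcases hσ p with hσp | hσp <;> rcases hσ q with hσq | hσq <;> rw [hσp, hσq] at hqp
    · exact hp_mem (hqp ▸ hq)
    · rw [neg_injective hqp, hσp] at hσq
      exact hne hσq
    · rw [hqp, neg_neg, hσp] at hσq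
      exact hne hσq.symm
    · exact hp_mem (neg_injective hqp ▸ hq)
  · rintro _ ⟨p, hp, rfl⟩ _ ⟨q, hq, rfl⟩
    obtain ⟨hlower, hupper⟩ := abs_le.1 (hQ.2.2 p hp q hq)
    rw [abs_le]
    rcases hσ p with hσp | hσp <;> rcases hσ q with hσq | hσq <;>
      simp only [hσp, hσq, Prod.fst_neg, Prod.snd_neg] <;> constructor <;> linarith

end IsKNice

/-- The representative of `±p` in the closed upper half-plane. -/
def toUpperHalf (p : ℤ × ℤ) : ℤ × ℤ := if p.2 < 0 then -p else p

theorem toUpperHalf_eq_or_neg (p : ℤ × ℤ) : toUpperHalf p = p ∨ toUpperHalf p = -p := by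
  unfold toUpperHalf; split_ifs <;> simp only [true_or, or_true]

theorem snd_toUpperHalf (p : ℤ × ℤ) : (toUpperHalf p).2 = |p.2| := by
  unfold toUpperHalf
  split_ifs with hp
  · exact (abs_of_neg hp).symm
  · exact (abs_of_nonneg (not_lt.1 hp)).symm

theorem yNonneg_image_toUpperHalf (Q : Set (ℤ × ℤ)) : YNonneg (toUpperHalf '' Q) :=
  Set.forall_mem_image.2 fun p _ ↦ (snd_toUpperHalf p).ge.trans' (abs_nonneg _)

theorem HeightEq.image_toUpperHalf {Q : Set (ℤ × ℤ)} {h : ℕ} (hht : HeightEq Q h) :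
    HeightEq (toUpperHalf '' Q) h := by
  have habs (p : ℤ × ℤ) : |(toUpperHalf p).2| = |p.2| := by rw [snd_toUpperHalf, abs_abs]
  obtain ⟨hle, p, hp, hph⟩ := hht
  exact ⟨Set.forall_mem_image.2 fun q hq ↦ (habs q).trans_le (hle q hq), _,
    Set.mem_image_of_mem _ hp, (habs p).trans hph⟩

/-- The first coordinates of the points of `Q` at height `n`. -/
def row (Q : Finset (ℤ × ℤ)) (n : ℤ) : Finset ℤ := {p ∈ Q | p.2 = n}.image Prod.fst

theorem mem_row {Q : Finset (ℤ × ℤ)} {m n : ℤ} : m ∈ row Q n ↔ (m, n) ∈ Q := by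
  simp only [row, mem_image, mem_filter, Prod.exists, exists_and_right, exists_eq_right]

theorem card_eq_sum_card_row {Q : Finset (ℤ × ℤ)} {h : ℕ} (hpos : YNonneg Q)
    (hle : HeightLe Q h) :
    #Q = ∑ i ∈ range h, #(row Q (i + 1 : ℕ)) + #(row Q 0) := by
  have hmaps : ∀ p ∈ Q, p.2.toNat ∈ range (h + 1) := fun p hp ↦ by
    have := (abs_le.1 (hle p hp)).2
    rw [mem_range]
    lia
  have hfiber (n : ℕ) : #(row Q n) = #{p ∈ Q | p.2.toNat = n} := by
    rw [row, card_image_of_injOn fun p hp q hq hpq ↦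
      Prod.ext hpq ((mem_filter.1 hp).2.trans (mem_filter.1 hq).2.symm)]
    refine congrArg _ (filter_congr fun p hp ↦ ?_)
    have := hpos p hp
    lia
  rw [card_eq_sum_card_fiberwise hmaps, sum_range_succ']
  simp only [← hfiber, Nat.cast_zero]

theorem IsKNice.card_row_zero_le {Q : Finset (ℤ × ℤ)} {k : ℕ} (hQ : IsKNice k (Q : Set (ℤ × ℤ))) :
    #(row Q 0) ≤ 1 := by
  have hunit {m : ℤ} (hm : m ∈ row Q 0) : m.natAbs = 1 := by
    simpa only [Int.gcd_zero_right] using (hQ.1 _ (mem_row.1 hm)).2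
  refine card_le_one.2 fun m hm n hn ↦
    (Int.natAbs_eq_natAbs_iff.1 ((hunit hm).trans (hunit hn).symm)).resolve_right ?_
  rintro rfl
  exact hQ.2.1 _ (mem_row.1 hn) (mem_row.1 hm)

theorem card_row_le {Q : Finset (ℤ × ℤ)} {K : Set (ℝ × ℝ)} {P n : ℕ} (hP : 0 < P)
    (hgcd : ∀ p ∈ Q, Int.gcd p.1 p.2 = 1) (hQK : ∀ m ∈ row Q n, ((m, n) : ℝ × ℝ) ∈ K)
    (hbdd : Bornology.IsBounded {x | (x, (n : ℝ)) ∈ K}) :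
    (#(row Q n) : ℝ) ≤
      coprimeDensity (n.gcd P) * chordWidth K n + sieveError (n.gcd P) := by
  refine card_le_of_isCoprime (Nat.gcd_pos_of_pos_right n hP) Metric.diam_nonneg
    (fun m hm ↦ ?_) fun m hm m' hm' ↦ ?_
  · have hmn : IsCoprime m n := Int.isCoprime_iff_gcd_eq_one.2 (hgcd _ (mem_row.1 hm))
    exact (hmn.of_isCoprime_of_dvd_right (Int.natCast_dvd_natCast.2 (n.gcd_dvd_left P))).symm
  · exact (le_abs_self _).trans (Metric.dist_le_diam_of_mem hbdd (hQK m hm) (hQK m' hm'))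

theorem IsKNice.card_le_sum_chordWidth {P h k : ℕ} (hP : 0 < P) {Q : Finset (ℤ × ℤ)}
    (hQ : IsKNice k (Q : Set (ℤ × ℤ))) (hpos : YNonneg Q) (hle : HeightLe Q h)
    (hbdd : ∀ u, Bornology.IsBounded {x | (x, u) ∈ realHull Q}) :
    (#Q : ℝ) ≤
      ∑ i ∈ range h, (coprimeDensity ((i + 1).gcd P) : ℝ) * chordWidth (realHull Q) (i + 1 : ℕ) +
        ∑ i ∈ range h, (sieveError ((i + 1).gcd P) : ℝ) + 1 := by
  have hrow (i : ℕ) : (#(row Q (i + 1 : ℕ)) : ℝ) ≤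
      coprimeDensity ((i + 1).gcd P) * chordWidth (realHull Q) (i + 1 : ℕ) +
        sieveError ((i + 1).gcd P) :=
    card_row_le hP (fun p hp ↦ (hQ.1 p hp).2)
      (fun m hm ↦ mod_cast cast_mem_realHull (mem_row.1 hm)) (hbdd _)
  have hzero : (#(row Q 0) : ℝ) ≤ 1 := mod_cast hQ.card_row_zero_le
  rw [card_eq_sum_card_row hpos hle, Nat.cast_add, Nat.cast_sum, ← sum_add_distrib]
  gcongr with i
  exact hrow i

theorem IsKNice.card_le_of_yNonneg {P h k : ℕ} (hP : 0 < P) (hh : 0 < h) {Q : Finset (ℤ × ℤ)}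
    (hQ : IsKNice k (Q : Set (ℤ × ℤ))) (hpos : YNonneg Q) (hht : HeightEq Q h) :
    (#Q : ℝ) ≤ gcdMean coprimeDensity P * (π / 2 * k + 2 * k / h * P) +
      gcdMean sieveError P * (h + P) + 1 := by
  have hK : AbsConvex ℝ (realHull Q) := absConvex_realHull Q
  have hdet := hQ.abs_planeDet_le
  have hh' : (0 : ℝ) < h := mod_cast hh
  obtain ⟨⟨a, b⟩, ha, hb⟩ := hht.2
  obtain rfl : b = h := by rw [← hb, abs_of_nonneg (hpos _ ha)]
  have ha' : ((a, h) : ℝ × ℝ) ∈ realHull Q := cast_mem_realHull ha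
  have hbdd := isBounded_chord hdet hh' ha'
  have hmean : (0 : ℝ) ≤ gcdMean coprimeDensity P :=
    mod_cast gcdMean_nonneg coprimeDensity_nonneg P
  have hmain := sum_gcd_mul_le coprimeDensity_nonneg hP (h := h)
    ((antitoneOn_chordWidth hK hbdd).mono Set.Icc_subset_Ici_self) Metric.diam_nonneg
  have herror : ∑ i ∈ range h, (sieveError ((i + 1).gcd P) : ℝ) ≤
      gcdMean sieveError P * (h + P) := mod_cast sum_gcd_le sieveError_nonneg hP h
  calc (#Q : ℝ)
    _ ≤ _ := hQ.card_le_sum_chordWidth hP hpos hht.1 hbdd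
    _ ≤ gcdMean coprimeDensity P *
            ((∫ u in 0..h, chordWidth (realHull Q) u) + P * chordWidth (realHull Q) 0) +
          gcdMean sieveError P * (h + P) + 1 := by gcongr
    _ ≤ gcdMean coprimeDensity P * (π / 2 * k + 2 * k / h * P) +
          gcdMean sieveError P * (h + P) + 1 := by
        rw [mul_comm (P : ℝ)]
        gcongr
        · exact integral_chordWidth_le hK hdet hh' ha'
        · exact chordWidth_zero_le hK hdet hh' ha'

theorem kNice_large_height_card_bound_general {P h k : ℕ} (hP : 0 < P) (hh : 0 < h)
    {Q : Set (ℤ × ℤ)} (hQ : IsKNice k Q) (hht : HeightEq Q h) :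
    Q.Finite ∧ (Q.ncard : ℝ) ≤ gcdMean coprimeDensity P * (π / 2 * k + 2 * k / h * P) +
      gcdMean sieveError P * (h + P) + 1 := by
  obtain ⟨p, hp, hph⟩ := hht.2
  have hfinite : Q.Finite := hQ.finite hht.1 hp fun hp₂ ↦ by
    rw [hp₂, abs_zero] at hph
    lia
  refine ⟨hfinite, ?_⟩
  lift toUpperHalf '' Q to Finset (ℤ × ℤ) using hfinite.image _ with R hR
  rw [← (hQ.injOn_of_eq_or_neg toUpperHalf_eq_or_neg).ncard_image, ← hR,
    Set.ncard_coe_finset]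
  apply IsKNice.card_le_of_yNonneg hP hh <;> rw [hR]
  · exact hQ.image_of_eq_or_neg toUpperHalf_eq_or_neg
  · exact yNonneg_image_toUpperHalf Q
  · exact hht.image_toUpperHalf

theorem gcdMean_coprimeDensity_210 : gcdMean coprimeDensity 210 = 768 / 1225 := by
  decide +kernel

theorem gcdMean_sieveError_210 : gcdMean sieveError 210 = 4946 / 3675 := by
  decide +kernel

theorem bound_modulus_210_le {h k : ℝ} (hh : 41020 ≤ h) (hk : h ≤ k) :
    gcdMean coprimeDensity 210 * (π / 2 * k + 2 * k / h * 210) +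
      gcdMean sieveError 210 * (h + 210) + 1 ≤
    3264 * π / 10255 * k + 4946 / 3675 * h + 1 := by
  have hk_nonneg : 0 ≤ k := by linarith
  have hdiv : 2 * k / h ≤ 2 * k / 41020 := by gcongr
  have hpi : 3 * k ≤ π * k := by
    gcongr
    exact pi_gt_three.le
  rw [gcdMean_coprimeDensity_210, gcdMean_sieveError_210]
  push_cast
  linarith

theorem kNice_large_height_card_bound (h k : ℕ) (hh : 41020 ≤ h) (hk : h ≤ k)
    (Q : Set (ℤ × ℤ)) (hQ : IsKNice k Q) (hht : HeightEq Q h) :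
    Q.Finite ∧
      (Q.ncard : ℝ) ≤ (3264 * Real.pi / 10255) * k + (4946 / 3675) * h + 1 :=
  (kNice_large_height_card_bound_general (P := 210) (by norm_num) (by lia) hQ hht).imp_right
    fun hcard ↦ hcard.trans (bound_modulus_210_le (mod_cast hh) (mod_cast hk))
end

section
/- For every k ∈ ℕ and every k-nice set Q ⊆ ℤ², there exists a k-nice set equivalent to Q whose height is at most √(2k). -/
/-- Application of an integer `2 × 2` matrix to a pair of integers. -/
def matApply (A : Matrix (Fin 2) (Fin 2) ℤ) (p : ℤ × ℤ) : ℤ × ℤ :=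
  (A 0 0 * p.1 + A 0 1 * p.2, A 1 0 * p.1 + A 1 1 * p.2)

/-- `Q` and `Q'` are equivalent if `Q'` is obtained from `A • Q`, for some unimodular
integer matrix `A`, by negating a subset of its elements. -/
def EquivSets (Q Q' : Set (ℤ × ℤ)) : Prop :=
  ∃ A : Matrix (Fin 2) (Fin 2) ℤ, |A.det| = 1 ∧
    ∃ f : ℤ × ℤ → ℤ × ℤ, (∀ x, f x = x ∨ f x = -x) ∧
      Q' = f '' (matApply A '' Q)

/-! Write `[p, q]` for the determinant of two vectors of `ℤ²`. A primitive vector `x` completes to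
a unimodular matrix with `z ↦ [x, z]` as its second coordinate, so it suffices to find a primitive
`x` with `|[x, z]| ≤ √(2k)` for all `z ∈ Q`.

Choose `p, q ∈ Q` with `|[p, q]|` maximal. If it is zero, then `Q` lies on a line through the
origin, and any nonzero `x` on that line has `[x, z] = 0` for all `z ∈ Q`. Otherwise, by Cramer's
rule, every `z ∈ Q` is a combination of `p` and `q` with coefficients in `[-1, 1]`, hence
`|[x, z]| ≤ |[x, p]| + |[x, q]|`. The right-hand side is the larger of `|[x, p] ± [x, q]|`, the
absolute values of two linear forms in `x` of determinant `-2 [p, q]`, and Minkowski's linear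
forms theorem (here a pigeonhole argument in `ℤ²` modulo the image of the forms) makes both at
most `⌊√(2k)⌋` at some `x ≠ 0`. Dividing `x` by the gcd of its coordinates makes it primitive.
-/

section LinearForms

variable {ι : Type*} [Fintype ι]

lemma exists_mem_ne_zero_abs_le_of_card_quotient_lt (N : Submodule ℤ (ι → ℤ))
    [Finite ((ι → ℤ) ⧸ N)] (c : ι → ℕ) (h : Nat.card ((ι → ℤ) ⧸ N) < ∏ i, (c i + 1)) :
    ∃ v ∈ N, v ≠ 0 ∧ ∀ i, |v i| ≤ c i := by
  classical
  have := Fintype.ofFinite ((ι → ℤ) ⧸ N)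
  let box : Finset (ι → ℤ) := Finset.Icc 0 fun i => (c i : ℤ)
  have hcard : (Finset.univ : Finset ((ι → ℤ) ⧸ N)).card < box.card := by
    simpa [box, Pi.card_Icc, Nat.card_eq_fintype_card] using h
  obtain ⟨y, hy, z, hz, hyz, hmk⟩ := Finset.exists_ne_map_eq_of_card_lt_of_maps_to hcard
    (f := Submodule.Quotient.mk) fun _ _ => Finset.mem_coe.2 (Finset.mem_univ _)
  refine ⟨y - z, (Submodule.Quotient.eq N).1 hmk, sub_ne_zero.2 hyz, fun i => ?_⟩
  rw [Finset.mem_Icc] at hy hz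
  exact abs_sub_le_of_nonneg_of_le (hy.1 i) (hy.2 i) (hz.1 i) (hz.2 i)

variable [DecidableEq ι]

lemma natCard_quotient_range_mulVecLin (M : Matrix ι ι ℤ) (hM : M.det ≠ 0) :
    Nat.card ((ι → ℤ) ⧸ LinearMap.range M.mulVecLin) = M.det.natAbs := by
  have hinj : Function.Injective M.mulVecLin := Matrix.mulVec_injective_of_det_ne_zero hM
  rw [← Submodule.natAbs_det_equiv _ (LinearEquiv.ofInjective M.mulVecLin hinj),
    ← LinearMap.det_toLin' M]
  rfl

/-- Minkowski's linear forms theorem, for forms with integer coefficients. -/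
theorem exists_ne_zero_abs_mulVec_le (M : Matrix ι ι ℤ) (c : ι → ℕ)
    (h : M.det.natAbs < ∏ i, (c i + 1)) :
    ∃ x ≠ 0, ∀ i, |M.mulVec x i| ≤ c i := by
  by_cases hM : M.det = 0
  · obtain ⟨x, hx, hMx⟩ := Matrix.exists_mulVec_eq_zero_iff.2 hM
    exact ⟨x, hx, fun i => by simp [hMx]⟩
  have hcard := natCard_quotient_range_mulVecLin M hM
  have : Finite ((ι → ℤ) ⧸ LinearMap.range M.mulVecLin) :=
    Nat.finite_of_card_ne_zero (hcard ▸ Int.natAbs_ne_zero.2 hM)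
  obtain ⟨_, ⟨x, rfl⟩, hx, hle⟩ :=
    exists_mem_ne_zero_abs_le_of_card_quotient_lt _ c (hcard ▸ h)
  exact ⟨x, by rintro rfl; simp at hx, hle⟩

end LinearForms

section CrossDet

variable {R : Type*} [CommRing R]

/-- The determinant of two plane vectors, the quantity bounded in the definition of `k`-nice
sets. The term order is that of `IsKNice`, so that the two agree definitionally. -/
def crossDet (p q : R × R) : R := p.1 * q.2 - q.1 * p.2

lemma crossDet_mul_crossDet (p q x z : R × R) :
    crossDet p q * crossDet x z
      = crossDet z q * crossDet x p + crossDet p z * crossDet x q := by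
  simp only [crossDet]
  ring

lemma isCoprime_iff_exists_isUnit_crossDet {p : R × R} :
    IsCoprime p.1 p.2 ↔ ∃ q, IsUnit (crossDet p q) := by
  constructor
  · rintro ⟨a, b, h⟩
    have hdet : crossDet p (-b, a) = 1 := by
      simp only [crossDet]
      linear_combination h
    exact ⟨(-b, a), hdet ▸ isUnit_one⟩
  · rintro ⟨q, hq⟩
    obtain ⟨u, hu⟩ := hq.exists_right_inv
    exact ⟨u * q.2, -u * q.1, by simp only [crossDet] at hu; linear_combination hu⟩

lemma abs_crossDet_of_eq_or_eq_neg [LinearOrder R] [IsOrderedRing R] {p p' q q' : R × R}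
    (hp : p' = p ∨ p' = -p) (hq : q' = q ∨ q' = -q) : |crossDet p' q'| = |crossDet p q| := by
  rw [abs_eq_abs]
  rcases hp with rfl | rfl <;> rcases hq with rfl | rfl <;>
    simp [crossDet, neg_add_eq_sub]

lemma abs_crossDet_le_add [LinearOrder R] [IsStrictOrderedRing R] {p q z : R × R}
    (hpq : crossDet p q ≠ 0) (hzq : |crossDet z q| ≤ |crossDet p q|)
    (hpz : |crossDet p z| ≤ |crossDet p q|) (x : R × R) :
    |crossDet x z| ≤ |crossDet x p| + |crossDet x q| := by
  refine le_of_mul_le_mul_left ?_ (abs_pos.2 hpq)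
  calc |crossDet p q| * |crossDet x z|
      = |crossDet z q * crossDet x p + crossDet p z * crossDet x q| := by
        rw [← abs_mul, crossDet_mul_crossDet]
    _ ≤ |crossDet z q| * |crossDet x p| + |crossDet p z| * |crossDet x q| := by
        simpa only [abs_mul] using
          abs_add_le (crossDet z q * crossDet x p) (crossDet p z * crossDet x q)
    _ ≤ |crossDet p q| * |crossDet x p| + |crossDet p q| * |crossDet x q| := by gcongr
    _ = |crossDet p q| * (|crossDet x p| + |crossDet x q|) := (mul_add _ _ _).symm

end CrossDet

section SmallForm

lemma exists_ne_zero_abs_crossDet_add_le (p q : ℤ × ℤ) {N : ℕ}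
    (hN : 2 * |crossDet p q| < (N + 1) ^ 2) :
    ∃ x ≠ 0, |crossDet x p| + |crossDet x q| ≤ N := by
  let M : Matrix (Fin 2) (Fin 2) ℤ :=
    !![p.2 + q.2, -(p.1 + q.1); p.2 - q.2, -(p.1 - q.1)]
  have hdet : M.det = -2 * crossDet p q := by
    simp only [M, Matrix.det_fin_two_of, crossDet]
    ring
  have hlt : M.det.natAbs < ∏ _i : Fin 2, (N + 1) := by
    zify
    simpa [hdet, abs_mul] using hN
  obtain ⟨x, hx, hle⟩ := exists_ne_zero_abs_mulVec_le M (fun _ => N) hlt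
  have hadd : M.mulVec x 0 = crossDet (x 0, x 1) p + crossDet (x 0, x 1) q := by
    simp only [M, crossDet, Matrix.mulVec, dotProduct, Fin.sum_univ_two, Matrix.of_apply,
      Matrix.cons_val', Matrix.cons_val_fin_one, Matrix.cons_val_zero, Matrix.cons_val_one]
    ring
  have hsub : M.mulVec x 1 = crossDet (x 0, x 1) p - crossDet (x 0, x 1) q := by
    simp only [M, crossDet, Matrix.mulVec, dotProduct, Fin.sum_univ_two, Matrix.of_apply,
      Matrix.cons_val', Matrix.cons_val_fin_one, Matrix.cons_val_zero, Matrix.cons_val_one]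
    ring
  refine ⟨(x 0, x 1), fun h => hx ?_, ?_⟩
  · ext i
    fin_cases i
    exacts [congrArg Prod.fst h, congrArg Prod.snd h]
  · have h0 := hadd ▸ hle 0
    have h1 := hsub ▸ hle 1
    grind

lemma exists_isCoprime_abs_crossDet_le {x : ℤ × ℤ} (hx : x ≠ 0) :
    ∃ y : ℤ × ℤ, IsCoprime y.1 y.2 ∧ ∀ z, |crossDet y z| ≤ |crossDet x z| := by
  have hg : 0 < Int.gcd x.1 x.2 := Int.gcd_pos_iff.2 (by contrapose! hx; exact Prod.ext hx.1 hx.2)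
  obtain ⟨a, b, hab, ha, hb⟩ := Int.exists_gcd_one hg
  refine ⟨(a, b), Int.isCoprime_iff_gcd_eq_one.2 hab, fun z => ?_⟩
  have hmul : crossDet x z = crossDet (a, b) z * Int.gcd x.1 x.2 := by
    simp only [crossDet]
    linear_combination z.2 * ha - z.1 * hb
  rw [hmul, abs_mul, Nat.abs_cast]
  exact le_mul_of_one_le_right (abs_nonneg _) (mod_cast hg)

variable {Q : Set (ℤ × ℤ)}

lemma exists_ne_zero_crossDet_eq_zero (hQ : ∀ p ∈ Q, ∀ q ∈ Q, crossDet p q = 0) :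
    ∃ x ≠ 0, ∀ z ∈ Q, crossDet x z = 0 := by
  by_cases h : ∃ x ∈ Q, x ≠ 0
  · obtain ⟨x, hxQ, hx⟩ := h
    exact ⟨x, hx, hQ x hxQ⟩
  · push Not at h
    exact ⟨(1, 0), by simp, fun z hz => by simp [h z hz, crossDet]⟩

lemma exists_crossDet_maximal {k : ℤ} (hne : Q.Nonempty)
    (hQ : ∀ p ∈ Q, ∀ q ∈ Q, |crossDet p q| ≤ k) :
    ∃ p ∈ Q, ∃ q ∈ Q, ∀ p' ∈ Q, ∀ q' ∈ Q, |crossDet p' q'| ≤ |crossDet p q| := by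
  have hbdd : BddAbove (Set.image2 (fun p q => |crossDet p q|) Q Q) :=
    ⟨k, Set.forall_mem_image2.2 hQ⟩
  obtain ⟨_, ⟨p, hp, q, hq, rfl⟩, hmax⟩ := hbdd.exists_isGreatest_of_nonempty (hne.image2 hne)
  exact ⟨p, hp, q, hq, fun p' hp' q' hq' => hmax (Set.mem_image2_of_mem hp' hq')⟩

lemma exists_ne_zero_abs_crossDet_le_sqrt {k : ℕ}
    (hQ : ∀ p ∈ Q, ∀ q ∈ Q, |crossDet p q| ≤ k) :
    ∃ x ≠ 0, ∀ z ∈ Q, |crossDet x z| ≤ Nat.sqrt (2 * k) := by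
  by_cases hcol : ∀ p ∈ Q, ∀ q ∈ Q, crossDet p q = 0
  · obtain ⟨x, hx, hxQ⟩ := exists_ne_zero_crossDet_eq_zero hcol
    exact ⟨x, hx, fun z hz => by simp [hxQ z hz]⟩
  push Not at hcol
  obtain ⟨p₀, hp₀, q₀, hq₀, hpq₀⟩ := hcol
  obtain ⟨p, hp, q, hq, hmax⟩ := exists_crossDet_maximal ⟨p₀, hp₀⟩ hQ
  have hpq : crossDet p q ≠ 0 := abs_pos.1 ((abs_pos.2 hpq₀).trans_le (hmax p₀ hp₀ q₀ hq₀))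
  have hlt : 2 * |crossDet p q| < ((Nat.sqrt (2 * k) : ℤ) + 1) ^ 2 :=
    calc 2 * |crossDet p q| ≤ 2 * k := by gcongr; exact hQ p hp q hq
      _ < ((Nat.sqrt (2 * k) : ℤ) + 1) ^ 2 := mod_cast Nat.lt_succ_sqrt' (2 * k)
  obtain ⟨x, hx, hle⟩ := exists_ne_zero_abs_crossDet_add_le p q hlt
  exact ⟨x, hx, fun z hz =>
    (abs_crossDet_le_add hpq (hmax z hz q hq) (hmax p hp z hz) x).trans hle⟩

end SmallForm

section Equivalence

variable {A : Matrix (Fin 2) (Fin 2) ℤ}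

lemma matApply_neg (A : Matrix (Fin 2) (Fin 2) ℤ) (p : ℤ × ℤ) :
    matApply A (-p) = -matApply A p := by
  ext <;> simp only [matApply, Prod.fst_neg, Prod.snd_neg] <;> ring

lemma crossDet_matApply (A : Matrix (Fin 2) (Fin 2) ℤ) (p q : ℤ × ℤ) :
    crossDet (matApply A p) (matApply A q) = A.det * crossDet p q := by
  simp only [crossDet, matApply, Matrix.det_fin_two]
  ring

lemma matApply_injective (hA : A.det ≠ 0) : Function.Injective (matApply A) := by
  intro p q h
  have hcross (r : ℤ × ℤ) : crossDet p r = crossDet q r :=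
    mul_left_cancel₀ hA (by rw [← crossDet_matApply, ← crossDet_matApply, h])
  ext
  · simpa [crossDet] using hcross (0, 1)
  · simpa [crossDet] using hcross (1, 0)

lemma isCoprime_matApply (hA : IsUnit A.det) {p : ℤ × ℤ} (hp : IsCoprime p.1 p.2) :
    IsCoprime (matApply A p).1 (matApply A p).2 := by
  obtain ⟨q, hq⟩ := isCoprime_iff_exists_isUnit_crossDet.1 hp
  exact isCoprime_iff_exists_isUnit_crossDet.2
    ⟨matApply A q, crossDet_matApply A p q ▸ hA.mul hq⟩

namespace IsKNice

variable {k : ℕ} {Q Q' : Set (ℤ × ℤ)}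

lemma of_isCoprime (hcop : ∀ p ∈ Q, IsCoprime p.1 p.2) (hneg : ∀ p ∈ Q, -p ∉ Q)
    (hdet : ∀ p ∈ Q, ∀ q ∈ Q, |crossDet p q| ≤ k) : IsKNice k Q := by
  refine ⟨fun p hp => ⟨?_, Int.isCoprime_iff_gcd_eq_one.1 (hcop p hp)⟩, hneg, hdet⟩
  rintro rfl
  exact not_isCoprime_zero_zero (hcop _ hp)

lemma isCoprime (hQ : IsKNice k Q) {p : ℤ × ℤ} (hp : p ∈ Q) : IsCoprime p.1 p.2 :=
  Int.isCoprime_iff_gcd_eq_one.2 (hQ.1 p hp).2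

lemma abs_crossDet_le (hQ : IsKNice k Q) : ∀ p ∈ Q, ∀ q ∈ Q, |crossDet p q| ≤ k :=
  hQ.2.2

lemma image_matApply (hQ : IsKNice k Q) (hA : |A.det| = 1) : IsKNice k (matApply A '' Q) := by
  have hunit : IsUnit A.det := Int.isUnit_iff_abs_eq.2 hA
  refine of_isCoprime ?_ ?_ ?_
  · rintro _ ⟨p, hp, rfl⟩
    exact isCoprime_matApply hunit (hQ.isCoprime hp)
  · rintro _ ⟨p, hp, rfl⟩ ⟨q, hq, hqp⟩
    rw [← matApply_neg] at hqp
    exact hQ.2.1 p hp (matApply_injective hunit.ne_zero hqp ▸ hq)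
  · rintro _ ⟨p, hp, rfl⟩ _ ⟨q, hq, rfl⟩
    rw [crossDet_matApply, abs_mul, hA, one_mul]
    exact hQ.abs_crossDet_le p hp q hq

lemma image_of_eq_or_eq_neg (hQ : IsKNice k Q) {f : ℤ × ℤ → ℤ × ℤ}
    (hf : ∀ x, f x = x ∨ f x = -x) : IsKNice k (f '' Q) := by
  refine of_isCoprime ?_ ?_ ?_
  · rintro _ ⟨p, hp, rfl⟩
    rcases hf p with h | h <;> rw [h]
    exacts [hQ.isCoprime hp, (hQ.isCoprime hp).neg_neg]
  · rintro _ ⟨p, hp, rfl⟩ ⟨q, hq, hqp⟩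
    have hqp' : q = p ∨ q = -p := by
      rcases hf p with hfp | hfp <;> rcases hf q with hfq | hfq <;> rw [hfp, hfq] at hqp
      exacts [Or.inr hqp, Or.inl (neg_inj.1 hqp), Or.inl (neg_neg p ▸ hqp),
        Or.inr (neg_inj.1 hqp)]
    rcases hqp' with rfl | rfl
    · have hq₀ : q = 0 := by
        rcases hf q with h | h <;> simpa [h, self_eq_neg, neg_eq_self] using hqp
      exact (hQ.1 q hq).1 hq₀
    · exact hQ.2.1 p hp hq
  · rintro _ ⟨p, hp, rfl⟩ _ ⟨q, hq, rfl⟩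
    rw [abs_crossDet_of_eq_or_eq_neg (hf p) (hf q)]
    exact hQ.abs_crossDet_le p hp q hq

theorem of_equivSets (hQ : IsKNice k Q) (h : EquivSets Q Q') : IsKNice k Q' := by
  obtain ⟨A, hA, f, hf, rfl⟩ := h
  exact (hQ.image_matApply hA).image_of_eq_or_eq_neg hf

end IsKNice

lemma equivSets_image_matApply (hA : |A.det| = 1) (Q : Set (ℤ × ℤ)) :
    EquivSets Q (matApply A '' Q) :=
  ⟨A, hA, id, fun _ => Or.inl rfl, (Set.image_id _).symm⟩

lemma exists_det_eq_one_matApply_snd_eq_crossDet {x : ℤ × ℤ} (hx : IsCoprime x.1 x.2) :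
    ∃ A : Matrix (Fin 2) (Fin 2) ℤ, A.det = 1 ∧ ∀ z, (matApply A z).2 = crossDet x z := by
  obtain ⟨g, hg₀, hg₁⟩ := hx.symm.neg_left.exists_SL2_row 1
  refine ⟨g, g.det_coe, fun z => ?_⟩
  simp only [matApply, crossDet, hg₀, hg₁]
  ring

end Equivalence

theorem exists_equiv_height_le_sqrt_two_k_general (k : ℕ) (Q : Set (ℤ × ℤ))
    (hQ : ∀ p ∈ Q, ∀ q ∈ Q, |crossDet p q| ≤ k) :
    ∃ Q' : Set (ℤ × ℤ), EquivSets Q Q' ∧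
      ∀ p ∈ Q', ((|p.2| : ℤ) : ℝ) ≤ Real.sqrt (2 * k) := by
  obtain ⟨x, hx, hxQ⟩ := exists_ne_zero_abs_crossDet_le_sqrt hQ
  obtain ⟨y, hy, hyx⟩ := exists_isCoprime_abs_crossDet_le hx
  obtain ⟨A, hA, hAy⟩ := exists_det_eq_one_matApply_snd_eq_crossDet hy
  refine ⟨matApply A '' Q, equivSets_image_matApply (by rw [hA, abs_one]) Q, ?_⟩
  rintro _ ⟨z, hz, rfl⟩
  have hle : |(matApply A z).2| ≤ Nat.sqrt (2 * k) := hAy z ▸ (hyx z).trans (hxQ z hz)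
  calc ((|(matApply A z).2| : ℤ) : ℝ) ≤ Nat.sqrt (2 * k) := mod_cast hle
    _ ≤ Real.sqrt (2 * k) := mod_cast Real.nat_sqrt_le_real_sqrt

theorem exists_equiv_height_le_sqrt_two_k (k : ℕ) (Q : Set (ℤ × ℤ))
    (hQ : IsKNice k Q) :
    ∃ Q' : Set (ℤ × ℤ), EquivSets Q Q' ∧ IsKNice k Q' ∧
      ∀ p ∈ Q', ((|p.2| : ℤ) : ℝ) ≤ Real.sqrt (2 * k) := by
  obtain ⟨Q', hQQ', hheight⟩ := exists_equiv_height_le_sqrt_two_k_general k Q hQ.abs_crossDet_le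
  exact ⟨Q', hQQ', hQ.of_equivSets hQQ', hheight⟩
end

section
/- Let γ_ℓ be the optimal value of the linear program LP_ℓ. If ℓ ∈ {1, 2, 3}, then γ_ℓ = 1, and if ℓ ≥ 4, then γ_ℓ < 1. -/
/-- `ρ_ℓ = ∏_{p prime, p ∣ ℓ} (1 - 1/p)`. -/
noncomputable def rho (ℓ : ℕ) : ℝ :=
  ∏ p ∈ ℓ.primeFactors, (1 - 1 / (p : ℝ))

/-- `α_ℓ` is the maximum over `1 ≤ a ≤ b ≤ 2ℓ` of the number of integers in `[a, b]`
coprime with `ℓ` minus `ρ_ℓ (b - a + 1)`. -/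
noncomputable def alpha (ℓ : ℕ) : ℝ :=
  sSup {x : ℝ | ∃ a b : ℤ, 1 ≤ a ∧ a ≤ b ∧ b ≤ 2 * (ℓ : ℤ) ∧
    x = ((Finset.filter (fun z => Int.gcd z (ℓ : ℤ) = 1) (Finset.Icc a b)).card : ℝ)
      - rho ℓ * ((b : ℝ) - (a : ℝ) + 1)}

/-- `γ_ℓ` is the optimal value of the linear program `LP_ℓ`. -/
noncomputable def gamma (ℓ : ℕ) : ℝ :=
  sSup {x : ℝ | ∃ σ τ : ℕ → ℝ,
    (∀ i, 1 ≤ i → i ≤ ℓ → 0 ≤ σ i ∧ σ i ≤ τ i) ∧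
    (∀ i j, 1 ≤ i → i ≤ ℓ → 1 ≤ j → j ≤ ℓ →
      -1 ≤ (i : ℝ) * τ j - (j : ℝ) * σ i ∧ (i : ℝ) * τ j - (j : ℝ) * σ i ≤ 1) ∧
    x = ∑ i ∈ Finset.Icc 1 ℓ, rho i * (τ i - σ i)}

/-- `β_0 = 1` and `β_ℓ = β_{ℓ-1} + α_ℓ + ρ_ℓ`. -/
noncomputable def beta : ℕ → ℝ
  | 0 => 1
  | n + 1 => beta n + alpha (n + 1) + rho (n + 1)

/-!
Call `(i, j)` a Farey pair of order `ℓ` if `1 ≤ i, j ≤ ℓ`, `i` and `j` are coprime and `ℓ < i + j`;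
these are the pairs of denominators of neighbouring Farey fractions of order `ℓ`. Each `i` occurs
in `φ(i) = i ρ_i` of them on either side, and the reciprocals `1 / (i j)` sum to `1` because the
mediant splits `1 / (i j)` into `1 / (i (i + j)) + 1 / ((i + j) j)`. Hence adding up the constraints
`τ_i / i - σ_j / j ≤ 1 / (i j)` over all Farey pairs expresses the objective as `1` minus the total
slack of these constraints, so the optimal value is at most `1`, and the value `1` is attained
exactly at the feasible points where all of them are tight.

The point `σ_i = (i - 1) / ℓ`, `τ_j = (ℓ + (ℓ - 1) j) / ℓ²` satisfies
`i τ_j - j σ_i = 1 - (ℓ - i) (ℓ - j) / ℓ²`, so it is tight on the pairs containing `ℓ`, and for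
`ℓ ≤ 3` every Farey pair contains `ℓ`. For `ℓ = m + 2 ≥ 4`, both `(m, m + 1)` and `(m + 1, m + 2)`
are Farey pairs; exchanging their second entries leaves the `σ` and `τ` parts of the two slacks
unchanged in total but lowers the sum of the `1 / (i j)` by `1 / (m (m + 1)² (m + 2))`, so the two
original slacks add up to at least this much.
-/

open Finset

section FareyPairs

/-- The ordered pairs of denominators of neighbouring Farey fractions of order `n`. They index the
constraints of the linear program that carry weight in its dual solution. -/
def fareyPairs (n : ℕ) : Finset (ℕ × ℕ) :=
  {p ∈ Icc 1 n ×ˢ Icc 1 n | p.1.Coprime p.2 ∧ n < p.1 + p.2}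

/-- The pairs of denominators of Farey neighbours whose mediant has denominator `n`. For `2 ≤ n`
these are the Farey pairs of order `n - 1` that are not Farey pairs of order `n`. -/
def mediantPairs (n : ℕ) : Finset (ℕ × ℕ) :=
  {p ∈ antidiagonal n | p.1.Coprime p.2}

variable {n i j : ℕ}

theorem mem_fareyPairs :
    (i, j) ∈ fareyPairs n ↔
      ((1 ≤ i ∧ i ≤ n) ∧ 1 ≤ j ∧ j ≤ n) ∧ i.Coprime j ∧ n < i + j := by
  simp [fareyPairs]

theorem swap_mem_fareyPairs : (i, j) ∈ fareyPairs n ↔ (j, i) ∈ fareyPairs n := by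
  simp only [mem_fareyPairs, Nat.coprime_comm (n := i), add_comm i]
  tauto

theorem mem_mediantPairs : (i, j) ∈ mediantPairs n ↔ i + j = n ∧ i.Coprime j := by
  simp [mediantPairs]

theorem swap_mem_mediantPairs : (i, j) ∈ mediantPairs n ↔ (j, i) ∈ mediantPairs n := by
  simp only [mem_mediantPairs, Nat.coprime_comm (n := i), add_comm i]

theorem pos_of_mem_mediantPairs (hn : 2 ≤ n) (h : (i, j) ∈ mediantPairs n) : 0 < i ∧ 0 < j := by
  obtain ⟨hsum, hij⟩ := mem_mediantPairs.1 h
  constructor <;> refine Nat.pos_of_ne_zero ?_ <;> rintro rfl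
  · rw [Nat.coprime_zero_left] at hij
    omega
  · rw [Nat.coprime_zero_right] at hij
    omega

theorem mem_fareyPairs_self_right (hn : 2 ≤ n) :
    (i, n) ∈ fareyPairs n ↔ ∃ j, (i, j) ∈ mediantPairs n := by
  constructor
  · intro h
    obtain ⟨⟨⟨-, hin⟩, -⟩, hcop, -⟩ := mem_fareyPairs.1 h
    exact ⟨n - i, mem_mediantPairs.2
      ⟨Nat.add_sub_cancel' hin, (Nat.coprime_sub_self_right hin).2 hcop⟩⟩
  · rintro ⟨j, h⟩
    obtain ⟨hi, hj⟩ := pos_of_mem_mediantPairs hn h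
    obtain ⟨rfl, hcop⟩ := mem_mediantPairs.1 h
    exact mem_fareyPairs.2
      ⟨⟨⟨hi, by omega⟩, by omega, le_rfl⟩, Nat.coprime_self_add_right.2 hcop, by omega⟩

theorem mem_fareyPairs_self_left (hn : 2 ≤ n) :
    (n, j) ∈ fareyPairs n ↔ ∃ i, (i, j) ∈ mediantPairs n := by
  rw [swap_mem_fareyPairs, mem_fareyPairs_self_right hn]
  exact exists_congr fun _ ↦ swap_mem_mediantPairs

theorem fareyPairs_succ_union_mediantPairs (hn : n ≠ 0) :
    fareyPairs (n + 1) ∪ mediantPairs (n + 1) =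
      fareyPairs n ∪ ((mediantPairs (n + 1)).image (fun p ↦ (p.1, n + 1)) ∪
        (mediantPairs (n + 1)).image (fun p ↦ (n + 1, p.2))) := by
  have hn' : 2 ≤ n + 1 := by omega
  ext ⟨i, j⟩
  have hpos := pos_of_mem_mediantPairs hn' (i := i) (j := j)
  have hright : (i, j) ∈ (mediantPairs (n + 1)).image (fun p ↦ (p.1, n + 1)) ↔
      (i, j) ∈ fareyPairs (n + 1) ∧ j = n + 1 := by
    have := mem_fareyPairs_self_right hn' (i := i)
    grind
  have hleft : (i, j) ∈ (mediantPairs (n + 1)).image (fun p ↦ (n + 1, p.2)) ↔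
      (i, j) ∈ fareyPairs (n + 1) ∧ i = n + 1 := by
    have := mem_fareyPairs_self_left hn' (j := j)
    grind
  simp only [mem_union, hright, hleft, mem_mediantPairs, mem_fareyPairs] at hpos ⊢
  omega

theorem sum_fareyPairs_succ {M : Type*} [AddCommMonoid M] (hn : n ≠ 0) (f : ℕ × ℕ → M) :
    ∑ p ∈ fareyPairs (n + 1), f p + ∑ p ∈ mediantPairs (n + 1), f p =
      ∑ p ∈ fareyPairs n, f p +
        ∑ p ∈ mediantPairs (n + 1), (f (p.1, n + 1) + f (n + 1, p.2)) := by
  set right : ℕ × ℕ → ℕ × ℕ := fun p ↦ (p.1, n + 1) with hright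
  set left : ℕ × ℕ → ℕ × ℕ := fun p ↦ (n + 1, p.2) with hleft
  have hpos {i j : ℕ} := pos_of_mem_mediantPairs (n := n + 1) (i := i) (j := j) (by omega)
  have right_injOn : Set.InjOn right (mediantPairs (n + 1)) := by
    rintro ⟨i, j⟩ hp ⟨i', j'⟩ hq h
    simp only [hright, mem_coe, mem_mediantPairs, Prod.mk.injEq] at hp hq h ⊢
    omega
  have left_injOn : Set.InjOn left (mediantPairs (n + 1)) := by
    rintro ⟨i, j⟩ hp ⟨i', j'⟩ hq h
    simp only [hleft, mem_coe, mem_mediantPairs, Prod.mk.injEq] at hp hq h ⊢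
    omega
  have disjoint_mediant : Disjoint (fareyPairs (n + 1)) (mediantPairs (n + 1)) := by
    refine disjoint_left.2 fun ⟨i, j⟩ hp hq ↦ ?_
    rw [mem_fareyPairs] at hp
    rw [mem_mediantPairs] at hq
    omega
  have disjoint_images :
      Disjoint ((mediantPairs (n + 1)).image right) ((mediantPairs (n + 1)).image left) := by
    simp only [disjoint_left, mem_image, hright, hleft, Prod.exists, not_exists, not_and,
      forall_exists_index, and_imp]
    rintro _ i j hp rfl i' j' - h
    obtain ⟨-, hj⟩ := hpos hp
    simp only [mem_mediantPairs, Prod.mk.injEq] at hp h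
    omega
  have disjoint_new : Disjoint (fareyPairs n)
      ((mediantPairs (n + 1)).image right ∪ (mediantPairs (n + 1)).image left) := by
    refine disjoint_left.2 fun ⟨i, j⟩ hp ↦ ?_
    simp only [mem_fareyPairs, mem_union, mem_image, hright, hleft, Prod.mk.injEq] at hp ⊢
    rintro (⟨-, -, -, rfl⟩ | ⟨-, -, rfl, -⟩) <;> omega
  rw [sum_add_distrib, ← sum_union disjoint_mediant, fareyPairs_succ_union_mediantPairs hn,
    sum_union disjoint_new, sum_union disjoint_images, sum_image right_injOn, sum_image left_injOn]

theorem sum_fareyPairs_one_div_mul (K : Type*) [Field K] [CharZero K] (hn : n ≠ 0) :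
    ∑ p ∈ fareyPairs n, 1 / ((p.1 : K) * p.2) = 1 := by
  induction n, Nat.one_le_iff_ne_zero.2 hn using Nat.le_induction with
  | base => simp [show fareyPairs 1 = {(1, 1)} by decide]
  | succ n hn ih =>
    have hmediant : ∀ p ∈ mediantPairs (n + 1),
        1 / ((p.1 : K) * p.2) = 1 / (p.1 * (n + 1 : ℕ)) + 1 / ((n + 1 : ℕ) * p.2) := by
      rintro ⟨i, j⟩ hp
      obtain ⟨hi, hj⟩ := pos_of_mem_mediantPairs (by omega) hp
      have hi' : (i : K) ≠ 0 := mod_cast hi.ne'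
      have hj' : (j : K) ≠ 0 := mod_cast hj.ne'
      have hij : (i + j : K) ≠ 0 := mod_cast (Nat.add_pos_left hi j).ne'
      rw [← (mem_mediantPairs.1 hp).1]
      push_cast
      field_simp
      ring
    have hsplit := sum_fareyPairs_succ (n := n) (by omega) fun p ↦ 1 / ((p.1 : K) * p.2)
    rw [sum_congr rfl hmediant, ih (by omega)] at hsplit
    exact add_right_cancel hsplit

theorem card_filter_fst_fareyPairs (hin : i ≤ n) : #{p ∈ fareyPairs n | p.1 = i} = i.totient := by
  rw [← Nat.filter_coprime_Ico_eq_totient i (n + 1 - i)]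
  refine card_nbij' Prod.snd (i, ·) ?_ ?_ ?_ (fun _ _ ↦ rfl)
  · rintro ⟨a, j⟩ h
    simp only [coe_filter, Set.mem_ofPred_eq, mem_fareyPairs, mem_Ico] at h ⊢
    obtain ⟨⟨hbounds, hcop, hlt⟩, rfl⟩ := h
    exact ⟨by omega, hcop⟩
  · intro j h
    simp only [coe_filter, Set.mem_ofPred_eq, mem_fareyPairs, mem_Ico, and_true] at h ⊢
    exact ⟨by omega, h.2, by omega⟩
  · rintro ⟨a, j⟩ h
    obtain rfl : a = i := (mem_filter.1 h).2
    rfl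

theorem sum_fareyPairs_fst {M : Type*} [AddCommMonoid M] (n : ℕ) (f : ℕ → M) :
    ∑ p ∈ fareyPairs n, f p.1 = ∑ i ∈ Icc 1 n, i.totient • f i := by
  have hmaps : ∀ p ∈ fareyPairs n, p.1 ∈ Icc 1 n := fun p hp ↦
    mem_Icc.2 (mem_fareyPairs.1 hp).1.1
  rw [← sum_fiberwise_of_maps_to' hmaps]
  refine sum_congr rfl fun i hi ↦ ?_
  rw [sum_const, card_filter_fst_fareyPairs (mem_Icc.1 hi).2]

theorem sum_fareyPairs_snd {M : Type*} [AddCommMonoid M] (n : ℕ) (f : ℕ → M) :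
    ∑ p ∈ fareyPairs n, f p.2 = ∑ i ∈ Icc 1 n, i.totient • f i := by
  rw [← sum_fareyPairs_fst]
  exact sum_nbij' Prod.swap Prod.swap (fun _ ↦ swap_mem_fareyPairs.1)
    (fun _ ↦ swap_mem_fareyPairs.1) (fun _ _ ↦ rfl) (fun _ _ ↦ rfl) (fun _ _ ↦ rfl)

theorem self_succ_mem_fareyPairs (hin : i < n) (hni : n ≤ 2 * i) : (i, i + 1) ∈ fareyPairs n :=
  mem_fareyPairs.2 ⟨by omega, by simp, by omega⟩

theorem eq_or_eq_of_mem_fareyPairs (hn : n ≤ 3) (h : (i, j) ∈ fareyPairs n) : i = n ∨ j = n := by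
  by_contra! hne
  obtain ⟨hbounds, hcop, hlt⟩ := mem_fareyPairs.1 h
  obtain ⟨rfl, rfl⟩ : i = 2 ∧ j = 2 := by omega
  simp at hcop

end FareyPairs

theorem mul_rho (n : ℕ) : n * rho n = n.totient := by
  have h := congrArg ((↑) : ℚ → ℝ) (Nat.totient_eq_mul_prod_factors n)
  push_cast at h
  simp only [h, rho, one_div]

section LinearProgram

/-- The feasible region of the linear program `LP_ℓ`. Only the values of `σ` and `τ` on `[1, ℓ]` are
constrained. -/
structure IsFeasible (ℓ : ℕ) (σ τ : ℕ → ℝ) : Prop where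
  nonneg_and_le : ∀ i, 1 ≤ i → i ≤ ℓ → 0 ≤ σ i ∧ σ i ≤ τ i
  mem_bounds : ∀ i j, 1 ≤ i → i ≤ ℓ → 1 ≤ j → j ≤ ℓ →
    -1 ≤ (i : ℝ) * τ j - (j : ℝ) * σ i ∧ (i : ℝ) * τ j - (j : ℝ) * σ i ≤ 1

/-- The objective function of the linear program `LP_ℓ`. -/
noncomputable def objective (ℓ : ℕ) (σ τ : ℕ → ℝ) : ℝ :=
  ∑ i ∈ Icc 1 ℓ, rho i * (τ i - σ i)

/-- The slack of the constraint `j τ_i - i σ_j ≤ 1` after division by `i j`, for positive `i` and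
`j`. Here `i` is the index of `τ`, whereas in `LP_ℓ` the index of `σ` comes first. -/
noncomputable def slack (σ τ : ℕ → ℝ) (i j : ℕ) : ℝ :=
  1 / ((i : ℝ) * j) - (τ i / i - σ j / j)

variable {ℓ i j : ℕ} {σ τ : ℕ → ℝ}

theorem slack_eq_div (hi : i ≠ 0) (hj : j ≠ 0) :
    slack σ τ i j = (1 - (j * τ i - i * σ j)) / (i * j) := by
  have hi' : (i : ℝ) ≠ 0 := mod_cast hi
  have hj' : (j : ℝ) ≠ 0 := mod_cast hj
  unfold slack
  field_simp

theorem IsFeasible.slack_nonneg (h : IsFeasible ℓ σ τ) (hi : i ∈ Icc 1 ℓ) (hj : j ∈ Icc 1 ℓ) :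
    0 ≤ slack σ τ i j := by
  rw [mem_Icc] at hi hj
  rw [slack_eq_div (by omega) (by omega)]
  have := (h.mem_bounds j i hj.1 hj.2 hi.1 hi.2).2
  exact div_nonneg (by linarith) (by positivity)

theorem slack_add_slack (σ τ : ℕ → ℝ) (i j k l : ℕ) :
    slack σ τ i j + slack σ τ k l = slack σ τ i l + slack σ τ k j +
      (1 / (i : ℝ) - 1 / k) * (1 / (j : ℝ) - 1 / l) := by
  simp only [slack, one_div, mul_inv]
  ring

theorem objective_eq_one_sub_sum_slack (hℓ : ℓ ≠ 0) (σ τ : ℕ → ℝ) :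
    objective ℓ σ τ = 1 - ∑ p ∈ fareyPairs ℓ, slack σ τ p.1 p.2 := by
  have hweight (f : ℕ → ℝ) : ∑ i ∈ Icc 1 ℓ, i.totient • (f i / i) = ∑ i ∈ Icc 1 ℓ, rho i * f i := by
    refine sum_congr rfl fun i hi ↦ ?_
    have hi' : (i : ℝ) ≠ 0 := mod_cast (Nat.one_le_iff_ne_zero.1 (mem_Icc.1 hi).1)
    rw [nsmul_eq_mul, ← mul_rho]
    field_simp
  simp only [slack, sum_sub_distrib, sum_fareyPairs_one_div_mul ℝ hℓ,
    sum_fareyPairs_fst ℓ fun i ↦ τ i / i, sum_fareyPairs_snd ℓ fun j ↦ σ j / j, hweight,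
    objective, mul_sub]
  ring

theorem IsFeasible.objective_le_one_sub_sum_slack (h : IsFeasible ℓ σ τ) (hℓ : ℓ ≠ 0)
    {s : Finset (ℕ × ℕ)} (hs : s ⊆ fareyPairs ℓ) :
    objective ℓ σ τ ≤ 1 - ∑ p ∈ s, slack σ τ p.1 p.2 := by
  rw [objective_eq_one_sub_sum_slack hℓ]
  refine sub_le_sub_left (sum_le_sum_of_subset_of_nonneg hs fun ⟨i, j⟩ hp _ ↦ ?_) 1
  obtain ⟨⟨hi, hj⟩, -⟩ := mem_fareyPairs.1 hp
  exact h.slack_nonneg (mem_Icc.2 hi) (mem_Icc.2 hj)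

theorem IsFeasible.objective_le_one (h : IsFeasible ℓ σ τ) (hℓ : ℓ ≠ 0) : objective ℓ σ τ ≤ 1 := by
  simpa using h.objective_le_one_sub_sum_slack hℓ (empty_subset _)

theorem IsFeasible.objective_add_two_le {m : ℕ} (h : IsFeasible (m + 2) σ τ) (hm : 2 ≤ m) :
    objective (m + 2) σ τ ≤ 1 - 1 / ((m : ℝ) * (m + 1) ^ 2 * (m + 2)) := by
  have hpairs : {(m, m + 1), (m + 1, m + 2)} ⊆ fareyPairs (m + 2) := by
    simp only [insert_subset_iff, singleton_subset_iff]
    exact ⟨self_succ_mem_fareyPairs (by omega) (by omega),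
      self_succ_mem_fareyPairs (by omega) (by omega)⟩
  have hle := h.objective_le_one_sub_sum_slack (by omega) hpairs
  rw [sum_pair (by simp), slack_add_slack] at hle
  have hleft : 0 ≤ slack σ τ m (m + 2) := h.slack_nonneg (mem_Icc.2 (by omega)) (by simp)
  have hright : 0 ≤ slack σ τ (m + 1) (m + 1) := h.slack_nonneg (by simp) (by simp)
  have hgap : (1 / (m : ℝ) - 1 / (m + 1 : ℕ)) * (1 / (m + 1 : ℕ) - 1 / (m + 2 : ℕ)) =
      1 / (m * (m + 1) ^ 2 * (m + 2)) := by
    have hm' : (m : ℝ) ≠ 0 := mod_cast (by omega : m ≠ 0)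
    push_cast
    field_simp
    ring
  linarith

theorem gamma_le {B : ℝ} (hB : ∀ σ τ, IsFeasible ℓ σ τ → objective ℓ σ τ ≤ B) : gamma ℓ ≤ B := by
  refine csSup_le ⟨_, 0, 0, by simp, by simp, rfl⟩ ?_
  rintro _ ⟨σ, τ, hbounds, hmem, rfl⟩
  exact hB σ τ ⟨hbounds, hmem⟩

theorem IsFeasible.objective_le_gamma (h : IsFeasible ℓ σ τ) (hℓ : ℓ ≠ 0) :
    objective ℓ σ τ ≤ gamma ℓ := by
  refine le_csSup ⟨1, ?_⟩ ⟨σ, τ, h.nonneg_and_le, h.mem_bounds, rfl⟩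
  rintro _ ⟨σ, τ, hbounds, hmem, rfl⟩
  exact IsFeasible.objective_le_one ⟨hbounds, hmem⟩ hℓ

/-- The `σ` part of a feasible point of `LP_ℓ` that is tight wherever one index equals `ℓ`. -/
noncomputable def tightSigma (ℓ i : ℕ) : ℝ := (i - 1) / ℓ

/-- The `τ` part of a feasible point of `LP_ℓ` that is tight wherever one index equals `ℓ`. -/
noncomputable def tightTau (ℓ j : ℕ) : ℝ := (ℓ + (ℓ - 1) * j) / ℓ ^ 2

theorem mul_tightTau_sub_mul_tightSigma (hℓ : ℓ ≠ 0) (i j : ℕ) :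
    i * tightTau ℓ j - j * tightSigma ℓ i = 1 - (ℓ - i : ℝ) * (ℓ - j) / ℓ ^ 2 := by
  have hℓ' : (ℓ : ℝ) ≠ 0 := mod_cast hℓ
  unfold tightSigma tightTau
  field_simp
  ring

theorem isFeasible_tight (ℓ : ℕ) : IsFeasible ℓ (tightSigma ℓ) (tightTau ℓ) where
  nonneg_and_le i hi hiℓ := by
    have hi' : (1 : ℝ) ≤ i := mod_cast hi
    have hiℓ' : (i : ℝ) ≤ ℓ := mod_cast hiℓ
    have hℓ : (0 : ℝ) < ℓ := by linarith
    have hgap : tightTau ℓ i - tightSigma ℓ i = (2 * ℓ - i) / ℓ ^ 2 := by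
      unfold tightSigma tightTau
      field_simp
      ring
    refine ⟨div_nonneg (by linarith) hℓ.le, sub_nonneg.1 ?_⟩
    rw [hgap]
    exact div_nonneg (by linarith) (by positivity)
  mem_bounds i j _ hiℓ hj hjℓ := by
    rw [mul_tightTau_sub_mul_tightSigma (by omega)]
    have hℓ : (0 : ℝ) < ℓ := mod_cast (by omega : 0 < ℓ)
    have hi' : (0 : ℝ) ≤ ℓ - i := sub_nonneg.2 (mod_cast hiℓ)
    have hj' : (0 : ℝ) ≤ ℓ - j := sub_nonneg.2 (mod_cast hjℓ)
    have hnonneg : 0 ≤ (ℓ - i : ℝ) * (ℓ - j) / ℓ ^ 2 := by positivity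
    have hle : (ℓ - i : ℝ) * (ℓ - j) / ℓ ^ 2 ≤ 1 := by
      rw [div_le_one (by positivity), sq]
      exact mul_le_mul (by simp) (by linarith) hj' hℓ.le
    constructor <;> linarith

theorem objective_tight (hℓ : ℓ ≠ 0) (hℓ3 : ℓ ≤ 3) :
    objective ℓ (tightSigma ℓ) (tightTau ℓ) = 1 := by
  rw [objective_eq_one_sub_sum_slack hℓ, sub_eq_self]
  refine sum_eq_zero fun ⟨i, j⟩ hp ↦ ?_
  obtain ⟨⟨hi, hj⟩, -⟩ := mem_fareyPairs.1 hp
  rw [slack_eq_div (by omega) (by omega), mul_tightTau_sub_mul_tightSigma hℓ]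
  rcases eq_or_eq_of_mem_fareyPairs hℓ3 hp with rfl | rfl <;> simp

theorem gamma_eq_one (hℓ : ℓ ≠ 0) (hℓ3 : ℓ ≤ 3) : gamma ℓ = 1 :=
  le_antisymm (gamma_le fun _ _ h ↦ h.objective_le_one hℓ) <|
    objective_tight hℓ hℓ3 ▸ (isFeasible_tight ℓ).objective_le_gamma hℓ

theorem gamma_add_two_le {m : ℕ} (hm : 2 ≤ m) :
    gamma (m + 2) ≤ 1 - 1 / ((m : ℝ) * (m + 1) ^ 2 * (m + 2)) :=
  gamma_le fun _ _ h ↦ h.objective_add_two_le hm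

end LinearProgram

theorem gamma_eq_one_iff_small :
    (∀ ℓ ∈ ({1, 2, 3} : Set ℕ), gamma ℓ = 1) ∧
    (∀ ℓ : ℕ, 4 ≤ ℓ → gamma ℓ < 1) := by
  constructor
  · rintro ℓ (rfl | rfl | rfl) <;> exact gamma_eq_one (by norm_num) (by norm_num)
  · intro ℓ hℓ
    obtain ⟨m, rfl⟩ := Nat.exists_eq_add_of_le' (show 2 ≤ ℓ by omega)
    have hm : 0 < m := by omega
    exact (gamma_add_two_le (by omega)).trans_lt (sub_lt_self 1 (by positivity))
end
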